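/- arXiv:1908.01149 — 2 statements merged into one kernel-verified Lean document; each statement's English description precedes it below -/
import Mathlib

section
/- Let (X,d) be a compact metric space and f : X → X a continuous map such that (X,f) has the approximate product property. If (X,f) admits at least two distinct ergodic f-invariant Borel probability measures, then the topological entropy of (X,f) is strictly positive. -/
open MeasureTheory Filter Set

section Defs

variable {X : Type*} [MetricSpace X]

/-- `segStart m t k` is the time `s_k` at which the `k`-th orbit segment starts
(indexing from `k = 0`): `s_0 = 0`, `s_{k+1} = s_k + m_k + t_k - 1`. -/
def segStart (m t : ℕ → ℕ) (k : ℕ) : ℕ :=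
  ∑ i ∈ Finset.range k, (m i + t i - 1)

/-- `(δ, ε)`-tracing of the sequence of orbit segments `(C k, m k)` with gaps `t k`
by the point `z`. -/
def Traced (f : X → X) (C : ℕ → X) (m t : ℕ → ℕ) (δ ε : ℝ) (z : X) : Prop :=
  ∀ k : ℕ,
    (((Finset.range (m k)).filter
      (fun j => ε < dist (f^[segStart m t k + j] z) (f^[j] (C k)))).card : ℝ)
      ≤ δ * (m k)

/-- The approximate product property. -/
def ApproxProduct (f : X → X) : Prop :=
  ∀ δ₁ δ₂ ε : ℝ, 0 < δ₁ → 0 < δ₂ → 0 < ε →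
    ∃ M : ℕ, ∀ n : ℕ, M < n → ∀ C : ℕ → X,
      ∃ t : ℕ → ℕ, (∀ k, 0 < t k) ∧ (∀ k, (t k : ℝ) ≤ 1 + δ₁ * n) ∧
        ∃ z : X, Traced f C (fun _ => n) t δ₂ ε z

/-- The strict approximate product property. -/
def StrictApproxProduct (f : X → X) : Prop :=
  ∀ δ ε : ℝ, 0 < δ → 0 < ε →
    ∃ M : ℕ, ∀ n : ℕ, M < n → ∀ C : ℕ → X,
      ∃ t : ℕ → ℕ, (∀ k, 0 < t k) ∧ (∀ k, (t k : ℝ) ≤ 1 + δ * n) ∧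
        ∃ z : X, Traced f C (fun _ => n) t 0 ε z

/-- Maximal cardinality of an `(n, ε)`-separated subset of `K`. -/
noncomputable def sepNum (f : X → X) (K : Set X) (n : ℕ) (ε : ℝ) : ℕ :=
  sSup {c : ℕ | ∃ S : Finset X, ↑S ⊆ K ∧ S.card = c ∧
    ∀ y ∈ S, ∀ y' ∈ S, y ≠ y' → ∃ j < n, ε < dist (f^[j] y) (f^[j] y')}

/-- Entropy of `f` on `K` at scale `ε`:
`h(K, f, ε) = limsup_n (1/n) log s(K, n, ε)`. -/
noncomputable def entScale (f : X → X) (K : Set X) (ε : ℝ) : EReal :=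
  limsup (fun n : ℕ => ((Real.log (sepNum f K n ε) / n : ℝ) : EReal)) atTop

/-- Bowen's topological entropy `h(f) = lim_{ε → 0} h(X, f, ε)`
(the limit is a supremum by monotonicity in `ε`). -/
noncomputable def topEnt (f : X → X) : EReal :=
  ⨆ (ε : ℝ) (_ : (0:ℝ) < ε), entScale f Set.univ ε

/-- Unique ergodicity: there is exactly one `f`-invariant Borel probability measure. -/
def UniquelyErgodic [MeasurableSpace X] (f : X → X) : Prop :=
  ∃! μ : Measure X, IsProbabilityMeasure μ ∧ Measure.map f μ = μ

/-- Minimality: every orbit is dense. -/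
def MinimalSystem (f : X → X) : Prop :=
  ∀ x : X, Dense (Set.range fun n => f^[n] x)

/-!
Some continuous `φ` has different integrals for the two measures, say at distance `γ`, so for every
`n` there are points `x` and `y` whose Birkhoff sums of length `n` differ by at least `n * γ`. A
word in two letters prescribes a concatenation of orbit segments of `x` and of `y`, and the
approximate product property provides a point tracing it. Tracing points of different words are
separated at a definite scale as soon as their segments start at nearly the same times, since near
orbits have near Birkhoff sums.

The starting times depend on the word, but the accumulated gaps grow by at most `2 * g` over two
segments, where `g` is small compared with `n`. Divided by `2 * g + 1` and rounded down, they
increase by `0` or `1` over two segments, so among the `4 ^ m` words of length `2 * m` at least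
`2 ^ m` share these rounded values. Their tracing points give entropy at least
`log 2 / (2 * (n + g))`.
-/

section BirkhoffSum

variable {α E : Type*} [NormedAddCommGroup E] {f : α → α} {φ : α → E} {B : ℝ}

theorem dist_le_two_mul_of_norm_le (hB : ∀ p, ‖φ p‖ ≤ B) (p q : α) :
    dist (φ p) (φ q) ≤ 2 * B := by
  calc dist (φ p) (φ q) ≤ ‖φ p‖ + ‖φ q‖ := dist_le_norm_add_norm _ _
    _ ≤ 2 * B := by linarith [hB p, hB q]

theorem dist_birkhoffSum_iterate_le (hB : ∀ p, ‖φ p‖ ≤ B) (n : ℕ) (p : α) (s s' : ℕ) :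
    dist (birkhoffSum f φ n (f^[s] p)) (birkhoffSum f φ n (f^[s'] p)) ≤ 2 * B * dist s s' := by
  wlog hss' : s ≤ s' generalizing s s'
  · simpa only [dist_comm] using this s' s (le_of_not_ge hss')
  have hstep (k : ℕ) : dist (birkhoffSum f φ n (f^[k] p)) (birkhoffSum f φ n (f^[k + 1] p))
      ≤ 2 * B := by
    rw [Function.iterate_succ_apply', dist_comm, dist_birkhoffSum_apply_birkhoffSum]
    exact dist_le_two_mul_of_norm_le hB _ _
  calc dist (birkhoffSum f φ n (f^[s] p)) (birkhoffSum f φ n (f^[s'] p))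
      ≤ ∑ _k ∈ Finset.Ico s s', 2 * B :=
        dist_le_Ico_sum_of_dist_le (f := fun k => birkhoffSum f φ n (f^[k] p)) hss'
          fun _ _ => hstep _
    _ = 2 * B * dist s s' := by
        rw [dist_comm, Nat.dist_eq, Finset.sum_const, Nat.card_Ico, nsmul_eq_mul,
          Nat.cast_sub hss', abs_of_nonneg (sub_nonneg.2 (Nat.cast_le.2 hss')), mul_comm]

variable [PseudoMetricSpace α] {e ε : ℝ}

theorem dist_birkhoffSum_le_of_forall_dist_le
    (hφ : ∀ p q, dist p q ≤ ε → dist (φ p) (φ q) ≤ e) {n : ℕ} {p q : α}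
    (hpq : ∀ j < n, dist (f^[j] p) (f^[j] q) ≤ ε) :
    dist (birkhoffSum f φ n p) (birkhoffSum f φ n q) ≤ n * e :=
  calc dist (birkhoffSum f φ n p) (birkhoffSum f φ n q)
      ≤ ∑ j ∈ Finset.range n, dist (φ (f^[j] p)) (φ (f^[j] q)) :=
        dist_birkhoffSum_birkhoffSum_le f φ n p q
    _ ≤ ∑ _j ∈ Finset.range n, e :=
        Finset.sum_le_sum fun j hj => hφ _ _ (hpq j (Finset.mem_range.1 hj))
    _ = n * e := by simp

theorem dist_birkhoffSum_le_add_card (hB : ∀ p, ‖φ p‖ ≤ B) (he : 0 ≤ e)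
    (hφ : ∀ p q, dist p q ≤ ε → dist (φ p) (φ q) ≤ e) (n : ℕ) (p q : α) :
    dist (birkhoffSum f φ n p) (birkhoffSum f φ n q) ≤
      n * e + 2 * B * ((Finset.range n).filter fun j => ε < dist (f^[j] p) (f^[j] q)).card := by
  calc dist (birkhoffSum f φ n p) (birkhoffSum f φ n q)
      ≤ ∑ j ∈ Finset.range n, dist (φ (f^[j] p)) (φ (f^[j] q)) :=
        dist_birkhoffSum_birkhoffSum_le f φ n p q
    _ ≤ ∑ j ∈ Finset.range n, (e + if ε < dist (f^[j] p) (f^[j] q) then 2 * B else 0) := by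
        refine Finset.sum_le_sum fun j _ => ?_
        split_ifs with hfar
        · exact (dist_le_two_mul_of_norm_le hB _ _).trans (le_add_of_nonneg_left he)
        · simpa only [add_zero] using hφ _ _ (not_lt.1 hfar)
    _ = n * e + 2 * B * ((Finset.range n).filter fun j => ε < dist (f^[j] p) (f^[j] q)).card := by
        rw [Finset.sum_add_distrib, ← Finset.sum_filter]
        simp only [Finset.sum_const, Finset.card_range, nsmul_eq_mul, mul_comm]

end BirkhoffSum

section InvariantMeasure

variable {α : Type*} [MeasurableSpace α] {f : α → α} {μ ν : Measure α}

theorem integrable_comp_iterate {E : Type*} [NormedAddCommGroup E] {φ : α → E}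
    (hf : MeasurePreserving f μ μ) (hφ : Integrable φ μ) (j : ℕ) :
    Integrable (fun p => φ (f^[j] p)) μ :=
  (hf.iterate j).integrable_comp_of_integrable hφ

theorem integrable_birkhoffSum {E : Type*} [NormedAddCommGroup E] {φ : α → E}
    (hf : MeasurePreserving f μ μ) (hφ : Integrable φ μ) (n : ℕ) :
    Integrable (birkhoffSum f φ n) μ :=
  integrable_finsetSum _ fun j _ => integrable_comp_iterate hf hφ j

theorem integral_birkhoffSum {E : Type*} [NormedAddCommGroup E] [NormedSpace ℝ E] {φ : α → E}
    (hf : MeasurePreserving f μ μ) (hφ : Integrable φ μ) (n : ℕ) :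
    ∫ p, birkhoffSum f φ n p ∂μ = n • ∫ p, φ p ∂μ := by
  have hiterate (j : ℕ) : ∫ p, φ (f^[j] p) ∂μ = ∫ p, φ p ∂μ := by
    have hj := hf.iterate j
    rw [← integral_map hj.aemeasurable (hj.map_eq.symm ▸ hφ.aestronglyMeasurable), hj.map_eq]
  simp only [birkhoffSum, integral_finsetSum _ fun j _ => integrable_comp_iterate hf hφ j,
    hiterate, Finset.sum_const, Finset.card_range]

theorem exists_mul_dist_integral_le_dist_birkhoffSum
    [IsProbabilityMeasure μ] [IsProbabilityMeasure ν]
    (hμ : MeasurePreserving f μ μ) (hν : MeasurePreserving f ν ν) {φ : α → ℝ}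
    (hφμ : Integrable φ μ) (hφν : Integrable φ ν) (n : ℕ) :
    ∃ x y, n * dist (∫ p, φ p ∂μ) (∫ p, φ p ∂ν) ≤
      dist (birkhoffSum f φ n x) (birkhoffSum f φ n y) := by
  wlog hle : ∫ p, φ p ∂ν ≤ ∫ p, φ p ∂μ generalizing μ ν
  · obtain ⟨x, y, hxy⟩ := this hν hμ hφν hφμ (le_of_not_ge hle)
    exact ⟨x, y, by rwa [dist_comm (∫ p, φ p ∂μ)]⟩
  obtain ⟨x, hx⟩ := exists_integral_le (integrable_birkhoffSum hμ hφμ n)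
  obtain ⟨y, hy⟩ := exists_le_integral (integrable_birkhoffSum hν hφν n)
  rw [integral_birkhoffSum hμ hφμ, nsmul_eq_mul] at hx
  rw [integral_birkhoffSum hν hφν, nsmul_eq_mul] at hy
  refine ⟨x, y, ?_⟩
  calc n * dist (∫ p, φ p ∂μ) (∫ p, φ p ∂ν)
      = n * ∫ p, φ p ∂μ - n * ∫ p, φ p ∂ν := by
        rw [Real.dist_eq, abs_of_nonneg (sub_nonneg.2 hle), mul_sub]
    _ ≤ birkhoffSum f φ n x - birkhoffSum f φ n y := sub_le_sub hx hy
    _ ≤ dist (birkhoffSum f φ n x) (birkhoffSum f φ n y) := le_abs_self _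

end InvariantMeasure

section Entropy

variable {f : X → X} {K : Set X} {ε : ℝ}

theorem bddAbove_card_separated (hf : UniformContinuous f) (hK : TotallyBounded K) (hε : 0 < ε)
    (n : ℕ) :
    BddAbove {c : ℕ | ∃ S : Finset X, ↑S ⊆ K ∧ S.card = c ∧
      ∀ y ∈ S, ∀ y' ∈ S, y ≠ y' → ∃ j < n, ε < dist (f^[j] y) (f^[j] y')} := by
  obtain ⟨T, hT, hKT⟩ := hK _
    (Dynamics.dynEntourage_mem_uniformity hf (Metric.dist_mem_uniformity (half_pos hε)) n)
  have hcenter : ∀ p ∈ K, ∃ c ∈ T, ∀ j < n, dist (f^[j] p) (f^[j] c) < ε / 2 := fun p hp => by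
    simpa only [mem_iUnion₂, mem_ofPred_eq, Dynamics.mem_dynEntourage, exists_prop] using hKT hp
  choose! center hcenter_mem hcenter_dist using hcenter
  refine ⟨hT.toFinset.card, ?_⟩
  rintro _ ⟨S, hSK, rfl, hS⟩
  refine Finset.card_le_card_of_injOn center
    (fun p hp => hT.mem_toFinset.2 (hcenter_mem p (hSK hp))) fun p hp q hq hpq => ?_
  by_contra hne
  obtain ⟨j, hj, hfar⟩ := hS p hp q hq hne
  have hp' := hcenter_dist p (hSK hp) j hj
  have hq' := hcenter_dist q (hSK hq) j hj
  rw [← hpq] at hq'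
  linarith [dist_triangle_right (f^[j] p) (f^[j] q) (f^[j] (center p))]

theorem card_le_sepNum (hf : UniformContinuous f) (hK : TotallyBounded K) (hε : 0 < ε) {n : ℕ}
    {ι : Type*} {W : Finset ι} {z : ι → X} (hzK : MapsTo z W K)
    (hsep : (W : Set ι).Pairwise fun a b => ∃ j < n, ε < dist (f^[j] (z a)) (f^[j] (z b))) :
    W.card ≤ sepNum f K n ε := by
  classical
  have hinj : InjOn z W := fun a ha b hb hab => by
    by_contra hne
    obtain ⟨j, -, hfar⟩ := hsep ha hb hne
    rw [hab, dist_self] at hfar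
    exact hfar.not_gt hε
  refine le_csSup (bddAbove_card_separated hf hK hε n)
    ⟨W.image z, by simpa only [Finset.coe_image] using hzK.image_subset,
      Finset.card_image_of_injOn hinj, fun y hy y' hy' hne => ?_⟩
  obtain ⟨a, ha, rfl⟩ := Finset.mem_image.1 hy
  obtain ⟨b, hb, rfl⟩ := Finset.mem_image.1 hy'
  exact hsep ha hb (ne_of_apply_ne z hne)

theorem log_div_le_entScale {c L : ℕ} (hc : 0 < c) (hL : 0 < L)
    (h : ∀ m, c ^ m ≤ sepNum f K (m * L) ε) :
    ((Real.log c / L : ℝ) : EReal) ≤ entScale f K ε := by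
  refine le_limsup_of_frequently_le (frequently_atTop.2 fun a => ?_)
  refine ⟨(a + 1) * L, (Nat.le_succ a).trans (Nat.le_mul_of_pos_right _ hL), ?_⟩
  rw [EReal.coe_le_coe_iff]
  have hlog : (a + 1 : ℕ) * Real.log c ≤ Real.log (sepNum f K ((a + 1) * L) ε) := by
    rw [← Real.log_pow]
    exact Real.log_le_log (by positivity) (mod_cast h (a + 1))
  calc Real.log c / L = ((a + 1 : ℕ) * Real.log c) / ((a + 1) * L : ℕ) := by
        rw [Nat.cast_mul, mul_div_mul_left _ _ (Nat.cast_ne_zero.2 a.succ_ne_zero)]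
    _ ≤ Real.log (sepNum f K ((a + 1) * L) ε) / ((a + 1) * L : ℕ) := by gcongr

theorem topEnt_pos_of_pow_le_sepNum (hε : 0 < ε) {c L : ℕ} (hc : 1 < c) (hL : 0 < L)
    (h : ∀ m, c ^ m ≤ sepNum f univ (m * L) ε) : 0 < topEnt f := by
  have hpos : 0 < Real.log c / L :=
    div_pos (Real.log_pos (Nat.one_lt_cast.2 hc)) (Nat.cast_pos.2 hL)
  calc (0 : EReal) < ((Real.log c / L : ℝ) : EReal) := EReal.coe_pos.2 hpos
    _ ≤ entScale f univ ε := log_div_le_entScale (zero_lt_one.trans hc) hL h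
    _ ≤ topEnt f := le_iSup₂_of_le ε hε le_rfl

end Entropy

section SlowSequences

theorem div_succ_le_div_add_one {G a b : ℕ} (h : b ≤ a + G) :
    b / (G + 1) ≤ a / (G + 1) + 1 := by
  rw [← Nat.add_div_right _ G.succ_pos]
  exact Nat.div_le_div_right (by lia)

theorem le_add_of_div_succ_eq {G a b : ℕ} (h : a / (G + 1) = b / (G + 1)) : a ≤ b + G := by
  have ha := Nat.div_add_mod a (G + 1)
  have hb := Nat.div_add_mod b (G + 1)
  have hlt := Nat.mod_lt a G.succ_pos
  rw [h] at ha
  lia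

theorem eq_of_slow_of_increments_iff {q r : ℕ → ℕ} (hq : Monotone q) (hr : Monotone r)
    (hq' : ∀ i, q (i + 1) ≤ q i + 1) (hr' : ∀ i, r (i + 1) ≤ r i + 1) (h0 : q 0 = r 0) {m : ℕ}
    (h : ∀ i < m, q (i + 1) = q i ↔ r (i + 1) = r i) : ∀ i ≤ m, q i = r i := by
  intro i hi
  induction i with
  | zero => exact h0
  | succ i ih =>
    have := ih (by lia)
    have := h i hi
    have := hq i.le_succ
    have := hr i.le_succ
    have := hq' i
    have := hr' i
    lia

theorem exists_large_subset_forall_le_add {ι : Type*} {S : Finset ι} {a : ι → ℕ → ℕ} {G m N : ℕ}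
    (h0 : ∀ w, a w 0 = 0) (hmono : ∀ w, Monotone (a w)) (hstep : ∀ w i, a w (i + 1) ≤ a w i + G)
    (hS : 2 ^ m * N ≤ S.card) :
    ∃ W ⊆ S, N ≤ W.card ∧ ∀ w ∈ W, ∀ w' ∈ W, ∀ i ≤ m, a w i ≤ a w' i + G := by
  classical
  let q (w : ι) (i : ℕ) : ℕ := a w i / (G + 1)
  let code (w : ι) : Finset ℕ := (Finset.range m).filter fun i => q w (i + 1) = q w i
  obtain ⟨c, -, hc⟩ := Finset.exists_le_card_fiber_of_mul_le_card_of_maps_to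
    (f := code) (t := (Finset.range m).powerset) (n := N)
    (fun w _ => Finset.mem_powerset.2 (Finset.filter_subset _ _)) (Finset.powerset_nonempty _)
    (by rwa [Finset.card_powerset, Finset.card_range])
  refine ⟨_, Finset.filter_subset _ _, hc, fun w hw w' hw' i hi => le_add_of_div_succ_eq ?_⟩
  have hcode : code w = code w' :=
    (Finset.mem_filter.1 hw).2.trans (Finset.mem_filter.1 hw').2.symm
  have hq (w : ι) : Monotone (q w) := fun _ _ hij => Nat.div_le_div_right (hmono w hij)
  have hq' (w : ι) (i : ℕ) : q w (i + 1) ≤ q w i + 1 := div_succ_le_div_add_one (hstep w i)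
  refine eq_of_slow_of_increments_iff (hq w) (hq w') (hq' w) (hq' w')
    (by simp only [q, h0]) (fun j hj => ?_) i hi
  simpa only [code, Finset.mem_filter, Finset.mem_range, hj, true_and] using
    Finset.ext_iff.1 hcode j

end SlowSequences

section Tracing

/-- The total delay `∑ i < k, (t i - 1)` caused by the gaps preceding the `k`-th segment, i.e. the
difference between its starting time and that of a concatenation without gaps. -/
def drift (t : ℕ → ℕ) (k : ℕ) : ℕ :=
  ∑ i ∈ Finset.range k, (t i - 1)

variable {t t' : ℕ → ℕ} {g n : ℕ}

theorem segStart_const_eq (ht : ∀ k, 0 < t k) (n k : ℕ) :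
    segStart (fun _ => n) t k = k * n + drift t k := by
  simp only [segStart, drift, Nat.add_sub_assoc (ht _), Finset.sum_add_distrib,
    Finset.sum_const, Finset.card_range, smul_eq_mul]

theorem monotone_drift (t : ℕ → ℕ) : Monotone (drift t) := fun _ _ hij =>
  Finset.sum_le_sum_of_subset (Finset.range_mono hij)

theorem drift_succ_le (htg : ∀ k, t k ≤ g + 1) (k : ℕ) : drift t (k + 1) ≤ drift t k + g := by
  rw [drift, Finset.sum_range_succ]
  exact Nat.add_le_add_left (Nat.sub_le_of_le_add (htg k)) _

theorem drift_le (htg : ∀ k, t k ≤ g + 1) (k : ℕ) : drift t k ≤ k * g := by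
  simpa only [drift, Finset.card_range, smul_eq_mul] using
    Finset.sum_le_card_nsmul (Finset.range k) (fun i => t i - 1) g
      fun i _ => Nat.sub_le_of_le_add (htg i)

theorem segStart_const_add_le (ht : ∀ k, 0 < t k) (htg : ∀ k, t k ≤ g + 1) {k N : ℕ}
    (hk : k < N) : segStart (fun _ => n) t k + n ≤ N * (n + g) :=
  calc segStart (fun _ => n) t k + n ≤ k * (n + g) + (n + g) := by
        rw [segStart_const_eq ht, mul_add]
        have := drift_le htg k
        lia
    _ = (k + 1) * (n + g) := (Nat.succ_mul _ _).symm
    _ ≤ N * (n + g) := Nat.mul_le_mul_right _ hk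

theorem segStart_const_le_add_of_drift_le (ht : ∀ k, 0 < t k) (ht' : ∀ k, 0 < t' k)
    (htg : ∀ k, t k ≤ g + 1) {m : ℕ}
    (hdrift : ∀ i ≤ m, drift t (2 * i) ≤ drift t' (2 * i) + 2 * g) {k : ℕ} (hk : k < 2 * m) :
    segStart (fun _ => n) t k ≤ segStart (fun _ => n) t' k + 3 * g := by
  have hclose := hdrift (k / 2) (by lia)
  have hmono : drift t' (2 * (k / 2)) ≤ drift t' k := monotone_drift t' (by lia)
  have hlast : drift t k ≤ drift t (2 * (k / 2)) + g :=
    (monotone_drift t (by lia)).trans (drift_succ_le htg (2 * (k / 2)))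
  rw [segStart_const_eq ht, segStart_const_eq ht']
  lia

theorem exists_large_subset_dist_segStart_le {ι : Type*} {S : Finset ι} {t : ι → ℕ → ℕ} {m N : ℕ}
    (ht : ∀ w k, 0 < t w k) (htg : ∀ w k, t w k ≤ g + 1) (hS : 2 ^ m * N ≤ S.card) :
    ∃ W ⊆ S, N ≤ W.card ∧ ∀ w ∈ W, ∀ w' ∈ W, ∀ k < 2 * m,
      dist (segStart (fun _ => n) (t w) k) (segStart (fun _ => n) (t w') k) ≤ 3 * g := by
  obtain ⟨W, hWS, hW, hdrift⟩ := exists_large_subset_forall_le_add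
    (a := fun w i => drift (t w) (2 * i)) (G := 2 * g) (fun _ => rfl)
    (fun w i j hij => monotone_drift (t w) (by lia))
    (fun w i => by
      have := drift_succ_le (htg w) (2 * i)
      have := drift_succ_le (htg w) (2 * i + 1)
      lia) hS
  refine ⟨W, hWS, hW, fun w hw w' hw' k hk => ?_⟩
  have hle := segStart_const_le_add_of_drift_le (n := n) (ht w) (ht w') (htg w)
    (hdrift w hw w' hw') hk
  have hge := segStart_const_le_add_of_drift_le (n := n) (ht w') (ht w) (htg w')
    (hdrift w' hw' w hw) hk
  rw [Nat.dist_eq, abs_sub_le_iff, sub_le_iff_le_add', sub_le_iff_le_add']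
  exact ⟨mod_cast hle, mod_cast hge⟩

variable {f : X → X} {C C' : ℕ → X} {m : ℕ → ℕ} {z z' : X}
  {δ ε : ℝ}

theorem ApproxProduct.eventually_exists_traced (happ : ApproxProduct f) {δ₁ δ₂ : ℝ}
    (hδ₁ : 0 < δ₁) (hδ₂ : 0 < δ₂) (hε : 0 < ε) :
    ∀ᶠ n : ℕ in atTop, ∀ C : ℕ → X, ∃ t : ℕ → ℕ, (∀ k, 0 < t k) ∧ (∀ k, t k ≤ ⌊δ₁ * n⌋₊ + 1) ∧
      ∃ z, Traced f C (fun _ => n) t δ₂ ε z := by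
  obtain ⟨M, hM⟩ := happ δ₁ δ₂ ε hδ₁ hδ₂ hε
  filter_upwards [eventually_gt_atTop M] with n hn C
  obtain ⟨t, ht, htδ, hz⟩ := hM n hn C
  refine ⟨t, ht, fun k => ?_, hz⟩
  rw [← Nat.sub_le_iff_le_add]
  refine Nat.le_floor ?_
  rw [Nat.cast_pred (ht k)]
  linarith [htδ k]

variable {E : Type*} [NormedAddCommGroup E] {φ : X → E} {B e : ℝ}

theorem Traced.dist_birkhoffSum_le (hz : Traced f C m t δ ε z) (hB : ∀ p, ‖φ p‖ ≤ B)
    (he : 0 ≤ e) (hφ : ∀ p q, dist p q ≤ ε → dist (φ p) (φ q) ≤ e) (k : ℕ) :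
    dist (birkhoffSum f φ (m k) (f^[segStart m t k] z)) (birkhoffSum f φ (m k) (C k)) ≤
      m k * e + 2 * B * (δ * m k) := by
  have hB' : 0 ≤ B := (norm_nonneg _).trans (hB z)
  refine (dist_birkhoffSum_le_add_card hB he hφ _ _ _).trans ?_
  gcongr
  simpa only [← Function.iterate_add_apply, add_comm] using hz k

theorem Traced.exists_lt_dist (hz : Traced f C m t δ ε z) (hz' : Traced f C' m t' δ ε z')
    (hB : ∀ p, ‖φ p‖ ≤ B) (he : 0 ≤ e) (hφ : ∀ p q, dist p q ≤ ε → dist (φ p) (φ q) ≤ e) {k : ℕ}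
    (hgap : m k * (3 * e + 4 * B * δ) + 2 * B * dist (segStart m t k) (segStart m t' k) <
      dist (birkhoffSum f φ (m k) (C k)) (birkhoffSum f φ (m k) (C' k))) :
    ∃ j < segStart m t k + m k, ε < dist (f^[j] z) (f^[j] z') := by
  by_contra! hnear
  let σ : X → E := birkhoffSum f φ (m k)
  let s := segStart m t k
  let s' := segStart m t' k
  have htrace : dist (σ (C k)) (σ (f^[s] z)) ≤ m k * e + 2 * B * (δ * m k) :=
    dist_comm (σ (C k)) _ ▸ hz.dist_birkhoffSum_le hB he hφ k
  have horbits : dist (σ (f^[s] z)) (σ (f^[s] z')) ≤ m k * e :=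
    dist_birkhoffSum_le_of_forall_dist_le hφ fun j hj => by
      simpa only [← Function.iterate_add_apply] using hnear (j + s) (by lia)
  have hshift : dist (σ (f^[s] z')) (σ (f^[s'] z')) ≤ 2 * B * dist s s' :=
    dist_birkhoffSum_iterate_le hB _ _ _ _
  have htrace' : dist (σ (f^[s'] z')) (σ (C' k)) ≤ m k * e + 2 * B * (δ * m k) :=
    hz'.dist_birkhoffSum_le hB he hφ k
  have htriangle : dist (σ (C k)) (σ (C' k)) ≤ dist (σ (C k)) (σ (f^[s] z)) +
      dist (σ (f^[s] z)) (σ (f^[s] z')) + dist (σ (f^[s] z')) (σ (f^[s'] z')) +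
      dist (σ (f^[s'] z')) (σ (C' k)) :=
    (dist_triangle4 _ _ _ _).trans (by gcongr; exact dist_triangle _ _ _)
  linarith

theorem two_pow_le_sepNum_of_exists_traced (hf : UniformContinuous f)
    (hX : TotallyBounded (univ : Set X)) (hε : 0 < ε)
    (htrace : ∀ C : ℕ → X, ∃ t : ℕ → ℕ, (∀ k, 0 < t k) ∧ (∀ k, t k ≤ g + 1) ∧
      ∃ z, Traced f C (fun _ => n) t δ ε z)
    (hB : ∀ p, ‖φ p‖ ≤ B) (he : 0 ≤ e) (hφ : ∀ p q, dist p q ≤ ε → dist (φ p) (φ q) ≤ e) {x y : X}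
    (hgap : n * (3 * e + 4 * B * δ) + 6 * B * g <
      dist (birkhoffSum f φ n x) (birkhoffSum f φ n y)) (m : ℕ) :
    2 ^ m ≤ sepNum f univ (m * (2 * (n + g))) ε := by
  have hB' : 0 ≤ B := (norm_nonneg _).trans (hB x)
  -- A word is encoded by the set of positions, all below `2 * m`, of its letter `y`.
  let word (w : Finset ℕ) (k : ℕ) : X := if k ∈ w then y else x
  choose t ht htg z hz using fun w => htrace (word w)
  obtain ⟨W, hWS, hW, hstart⟩ := exists_large_subset_dist_segStart_le (n := n)
    (S := (Finset.range (2 * m)).powerset) (m := m) (N := 2 ^ m) ht htg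
    (by rw [Finset.card_powerset, Finset.card_range, two_mul, pow_add])
  refine hW.trans (card_le_sepNum hf hX hε (mapsTo_univ z _) fun w hw w' hw' hne => ?_)
  obtain ⟨k, hk⟩ := Finset.symmDiff_nonempty.2 hne
  have hk_lt : k < 2 * m := Finset.mem_range.1 <| (Finset.mem_symmDiff.1 hk).elim
    (fun h => Finset.mem_powerset.1 (hWS hw) h.1) fun h => Finset.mem_powerset.1 (hWS hw') h.1
  have hword : dist (birkhoffSum f φ n (word w k)) (birkhoffSum f φ n (word w' k)) =
      dist (birkhoffSum f φ n x) (birkhoffSum f φ n y) := by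
    rcases Finset.mem_symmDiff.1 hk with ⟨hk, hk'⟩ | ⟨hk, hk'⟩
    · simp only [word, hk, hk', if_true, if_false, dist_comm]
    · simp only [word, hk, hk', if_true, if_false]
  have hshift := mul_le_mul_of_nonneg_left (hstart w hw w' hw' k hk_lt)
    (mul_nonneg zero_le_two hB')
  obtain ⟨j, hj, hfar⟩ := (hz w).exists_lt_dist (hz w') hB he hφ (k := k) (by linarith)
  refine ⟨j, hj.trans_le ?_, hfar⟩
  calc segStart (fun _ => n) (t w) k + n ≤ 2 * m * (n + g) :=
        segStart_const_add_le (ht w) (htg w) hk_lt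
    _ = m * (2 * (n + g)) := by ring

end Tracing

theorem topEnt_pos_of_frequently_birkhoffSum_gap {E : Type*} [NormedAddCommGroup E]
    [CompactSpace X] {f : X → X} (hf : Continuous f) (happ : ApproxProduct f) {φ : X → E}
    (hφ : Continuous φ) {γ : ℝ} (hγ : 0 < γ)
    (hgap : ∃ᶠ n : ℕ in atTop, ∃ x y,
      n * γ ≤ dist (birkhoffSum f φ n x) (birkhoffSum f φ n y)) :
    0 < topEnt f := by
  obtain ⟨B, hB0, hB⟩ := (isCompact_range hφ).isBounded.exists_pos_norm_le
  obtain ⟨ε, hε, hφε⟩ := Metric.uniformContinuous_iff_le.1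
    (CompactSpace.uniformContinuous_of_continuous hφ) (γ / 6) (by positivity)
  let δ := γ / (24 * B)
  have hδ : 0 < δ := by positivity
  have hBδ : B * δ = γ / 24 := by simp only [δ]; field_simp
  obtain ⟨n, ⟨⟨x, y, hxy⟩, htrace⟩, hn⟩ := ((hgap.and_eventually
    (happ.eventually_exists_traced hδ hδ hε)).and_eventually (eventually_gt_atTop 0)).exists
  have hn' : (0 : ℝ) < n := Nat.cast_pos.2 hn
  have hgap' : n * (3 * (γ / 6) + 4 * B * δ) + 6 * B * ⌊δ * n⌋₊ <
      dist (birkhoffSum f φ n x) (birkhoffSum f φ n y) :=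
    calc n * (3 * (γ / 6) + 4 * B * δ) + 6 * B * ⌊δ * n⌋₊
        ≤ n * (3 * (γ / 6) + 4 * B * δ) + 6 * B * (δ * n) := by
          gcongr
          exact Nat.floor_le (by positivity)
      _ = 11 / 12 * (n * γ) := by linear_combination 10 * n * hBδ
      _ < n * γ := by linarith [mul_pos hn' hγ]
      _ ≤ dist (birkhoffSum f φ n x) (birkhoffSum f φ n y) := hxy
  exact topEnt_pos_of_pow_le_sepNum hε one_lt_two (by positivity)
    (two_pow_le_sepNum_of_exists_traced (CompactSpace.uniformContinuous_of_continuous hf)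
      isCompact_univ.totallyBounded hε htrace (fun p => hB _ (mem_range_self p)) (by positivity)
      (fun p q hpq => hφε hpq) hgap')

theorem app_two_ergodic_measures_topEnt_pos_general
    [CompactSpace X] [MeasurableSpace X] [BorelSpace X]
    {f : X → X} (hf : Continuous f) (happ : ApproxProduct f)
    {μ ν : Measure X} [IsProbabilityMeasure μ] [IsProbabilityMeasure ν]
    (hμ : MeasurePreserving f μ μ) (hν : MeasurePreserving f ν ν) (hne : μ ≠ ν) :
    0 < topEnt f := by
  obtain ⟨φ, hφ⟩ : ∃ φ : BoundedContinuousFunction X ℝ, ∫ p, φ p ∂μ ≠ ∫ p, φ p ∂ν := by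
    by_contra! heq
    exact hne (ext_of_forall_integral_eq_of_IsFiniteMeasure heq)
  exact topEnt_pos_of_frequently_birkhoffSum_gap hf happ φ.continuous (dist_pos.2 hφ)
    (Frequently.of_forall fun n =>
      exists_mul_dist_integral_le_dist_birkhoffSum hμ hν (φ.integrable μ) (φ.integrable ν) n)

/-- If a compact system with the approximate product property has two distinct
ergodic invariant Borel probability measures, then its topological entropy is
strictly positive. -/
theorem app_two_ergodic_measures_topEnt_pos
    {X : Type*} [MetricSpace X] [CompactSpace X] [MeasurableSpace X] [BorelSpace X]
    (f : X → X) (hf : Continuous f) (happ : ApproxProduct f)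
    (μ ν : Measure X) (hμp : IsProbabilityMeasure μ) (hνp : IsProbabilityMeasure ν)
    (hμ : Ergodic f μ) (hν : Ergodic f ν) (hne : μ ≠ ν) :
    0 < topEnt f := by
  exact app_two_ergodic_measures_topEnt_pos_general hf happ hμ.toMeasurePreserving
    hν.toMeasurePreserving hne

end Defs
end

section
/- Let (X,d) be a compact metric space and f : X → X a continuous map such that (X,f) has the approximate product property. If the topological entropy of (X,f) is strictly positive, then (X,f) admits at least two distinct ergodic f-invariant Borel probability measures. -/
open MeasureTheory Filter Set

section Defs

variable {X : Type*} [MetricSpace X]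

/-!
Suppose that there is only one ergodic measure. Then the Birkhoff averages of a continuous `ψ` are
asymptotically the same on all orbits: by compactness of the set of invariant measures and
Krein–Milman, orbits with persistently larger or smaller averages would produce ergodic measures
with different integrals of `ψ`.

The approximate product property, applied to the constant sequence `x, x, …`, gives an orbit that
looks like repetitions of `x, f x, …, f^[n - 1] x`, separated by short gaps. Up to a small error,
its segments of length `N = n * M` are determined by the `M` times at which the repetitions start,
so they are close to one of at most `(2 * n * (M + 1)) ^ M = exp (o(N))` words. Taking for `ψ` the
distance of an orbit segment of length `N` to this set of words, every orbit is, up to errors of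
small density, a concatenation of these few words. A separated set therefore has subexponential
cardinality, and the entropy is zero.
-/

section ErgodicOptimization

variable {Y : Type*} {f : Y → Y}

theorem birkhoffAverage_comp_self {R M : Type*} [DivisionSemiring R] [AddCommMonoid M]
    [Module R M] (f : Y → Y) (g : Y → M) (n : ℕ) (y : Y) :
    birkhoffAverage R f (g ∘ f) n y = birkhoffAverage R f g n (f y) := by
  simp only [birkhoffAverage, birkhoffSum, Function.comp_apply, ← Function.iterate_succ_apply,
    Function.iterate_succ_apply']

theorem tendsto_birkhoffAverage_comp_self_sub [TopologicalSpace Y] [CompactSpace Y]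
    (g : C(Y, ℝ)) {ι : Type*} {l : Filter ι} {n : ι → ℕ} (hn : Tendsto n l atTop) (y : ι → Y) :
    Tendsto (fun k => birkhoffAverage ℝ f (g ∘ f) (n k) (y k) - birkhoffAverage ℝ f g (n k) (y k))
      l (nhds 0) := by
  have bound_tendsto : Tendsto (fun k => 2 * ‖g‖ / (n k : ℝ)) l (nhds 0) :=
    (tendsto_const_div_atTop_nhds_zero_nat (2 * ‖g‖)).comp hn
  refine squeeze_zero_norm (fun k => ?_) bound_tendsto
  rw [birkhoffAverage_comp_self, ← dist_eq_norm, dist_birkhoffAverage_apply_birkhoffAverage]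
  gcongr
  calc dist (g (f^[n k] (y k))) (g (y k))
      ≤ ‖g (f^[n k] (y k))‖ + ‖g (y k)‖ := dist_le_norm_add_norm _ _
    _ ≤ ‖g‖ + ‖g‖ := add_le_add (g.norm_coe_le_norm _) (g.norm_coe_le_norm _)
    _ = 2 * ‖g‖ := (two_mul _).symm

variable [TopologicalSpace Y] [MeasurableSpace Y]

theorem measure_ext_of_forall_integral_continuousMap_eq [CompactSpace Y] [HasOuterApproxClosed Y]
    [BorelSpace Y] {μ ν : Measure Y} [IsFiniteMeasure μ] [IsFiniteMeasure ν]
    (h : ∀ g : C(Y, ℝ), ∫ x, g x ∂μ = ∫ x, g x ∂ν) : μ = ν :=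
  ext_of_forall_integral_eq_of_IsFiniteMeasure fun g => h g.toContinuousMap

theorem integrable_continuousMap [CompactSpace Y] [OpensMeasurableSpace Y] (μ : Measure Y)
    [IsFiniteMeasure μ] (g : C(Y, ℝ)) : Integrable g μ :=
  (BoundedContinuousFunction.mkOfCompact g).integrable μ

/-- The set of `f`-invariant probability measures, as a subset of the space of probability measures
with the weak topology. -/
def invariantMeasures (f : Y → Y) : Set (ProbabilityMeasure Y) :=
  {P | MeasurePreserving f (P : Measure Y) P}

/-- Integration against `P`, as a point of the locally convex space `C(Y, ℝ) → ℝ` with the topology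
of pointwise convergence. In that space the Krein–Milman theorem can be applied. -/
noncomputable def integralFunctional (P : ProbabilityMeasure Y) : C(Y, ℝ) → ℝ :=
  fun g => ∫ x, g x ∂(P : Measure Y)

theorem isCompact_invariantMeasures [CompactSpace Y] [T2Space Y]
    [HasOuterApproxClosed Y] [BorelSpace Y] (hf : Continuous f) :
    IsCompact (invariantMeasures f) := by
  have fixed_points : invariantMeasures f =
      {P | P.map hf.measurable.aemeasurable = P} := by
    ext P
    exact ⟨fun h => Subtype.ext h.map_eq, fun h => ⟨hf.measurable, congrArg Subtype.val h⟩⟩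
  rw [fixed_points]
  exact (isClosed_eq (ProbabilityMeasure.continuous_map hf) continuous_id).isCompact

theorem continuous_integralFunctional [CompactSpace Y] [OpensMeasurableSpace Y] :
    Continuous (integralFunctional (Y := Y)) :=
  continuous_pi fun g => ProbabilityMeasure.continuous_integral_continuousMap g

theorem ergodic_of_integralFunctional_mem_extremePoints [CompactSpace Y] [HasOuterApproxClosed Y]
    [BorelSpace Y] {P : ProbabilityMeasure Y} (hP : P ∈ invariantMeasures f)
    (hext : integralFunctional P ∈
      extremePoints ℝ (integralFunctional '' invariantMeasures f)) :
    Ergodic f (P : Measure Y) := by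
  refine Ergodic.of_mem_extremePoints (mem_extremePoints_iff_left.2 ⟨⟨hP, inferInstance⟩, ?_⟩)
  rintro ν₁ ⟨hν₁, _⟩ ν₂ ⟨hν₂, _⟩ ⟨a, b, ha, hb, hab, hsum⟩
  have ha_top : a ≠ ⊤ := fun h => by simp [h] at hab
  have hb_top : b ≠ ⊤ := fun h => by simp [h] at hab
  have functional_eq : a.toReal • integralFunctional ⟨ν₁, ‹_›⟩ +
      b.toReal • integralFunctional ⟨ν₂, ‹_›⟩ = integralFunctional P := by
    funext g
    simp only [integralFunctional, ← hsum, Pi.add_apply, Pi.smul_apply, ProbabilityMeasure.coe_mk]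
    rw [integral_add_measure ((integrable_continuousMap ν₁ g).smul_measure ha_top)
      ((integrable_continuousMap ν₂ g).smul_measure hb_top), integral_smul_measure,
      integral_smul_measure]
  have functional_left_eq : integralFunctional ⟨ν₁, ‹_›⟩ = integralFunctional P :=
    (mem_extremePoints_iff_left.1 hext).2 _ ⟨⟨ν₁, ‹_›⟩, hν₁, rfl⟩ _ ⟨⟨ν₂, ‹_›⟩, hν₂, rfl⟩
      ⟨a.toReal, b.toReal, ENNReal.toReal_pos ha.ne' ha_top, ENNReal.toReal_pos hb.ne' hb_top,
        by rw [← ENNReal.toReal_add ha_top hb_top, hab, ENNReal.toReal_one], functional_eq⟩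
  exact measure_ext_of_forall_integral_continuousMap_eq fun g => congrFun functional_left_eq g

theorem exists_ergodic_integral_le_of_mem_invariantMeasures [CompactSpace Y] [T2Space Y]
    [HasOuterApproxClosed Y] [BorelSpace Y] (hf : Continuous f) (ψ : C(Y, ℝ))
    {P : ProbabilityMeasure Y} (hP : P ∈ invariantMeasures f) :
    ∃ μ : Measure Y, IsProbabilityMeasure μ ∧ Ergodic f μ ∧
      ∫ x, ψ x ∂(P : Measure Y) ≤ ∫ x, ψ x ∂μ := by
  let functionals : Set (C(Y, ℝ) → ℝ) := integralFunctional '' invariantMeasures f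
  let evalψ : StrongDual ℝ (C(Y, ℝ) → ℝ) := ContinuousLinearMap.proj ψ
  have compact_functionals : IsCompact functionals :=
    (isCompact_invariantMeasures hf).image continuous_integralFunctional
  have face_exposed : IsExposed ℝ functionals (evalψ.toExposed functionals) :=
    ContinuousLinearMap.toExposed.isExposed
  have face_nonempty : (evalψ.toExposed functionals).Nonempty := by
    obtain ⟨Λ, hΛ, hmax⟩ := compact_functionals.exists_isMaxOn ⟨_, P, hP, rfl⟩
      evalψ.continuous.continuousOn
    exact ⟨Λ, hΛ, fun _ h => hmax h⟩
  obtain ⟨Λ, hΛ⟩ := (face_exposed.isCompact compact_functionals).extremePoints_nonempty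
    face_nonempty
  obtain ⟨⟨Q, hQ, rfl⟩, hmax⟩ := hΛ.1
  exact ⟨Q, inferInstance, ergodic_of_integralFunctional_mem_extremePoints hQ
    (face_exposed.isExtreme.extremePoints_subset_extremePoints hΛ), hmax _ ⟨P, hP, rfl⟩⟩

/-- The uniform probability measure on the orbit segment `y, f y, …, f^[n - 1] y`, counted with
multiplicity. -/
noncomputable def empiricalMeasure (f : Y → Y) (n : ℕ) [NeZero n] (y : Y) :
    ProbabilityMeasure Y :=
  ⟨(n : ENNReal)⁻¹ • ∑ i ∈ Finset.range n, Measure.dirac (f^[i] y), ⟨by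
    simp [ENNReal.inv_mul_cancel (NeZero.ne (n : ENNReal)) (ENNReal.natCast_ne_top n)]⟩⟩

theorem integral_empiricalMeasure [CompactSpace Y] [OpensMeasurableSpace Y] (f : Y → Y) (n : ℕ)
    [NeZero n] (y : Y) (g : C(Y, ℝ)) :
    ∫ x, g x ∂(empiricalMeasure f n y : Measure Y) = birkhoffAverage ℝ f g n y := by
  rw [empiricalMeasure, ProbabilityMeasure.coe_mk, integral_smul_measure,
    integral_finsetSum_measure fun i _ => integrable_continuousMap _ g]
  simp [birkhoffAverage, birkhoffSum, integral_dirac' _ _ g.continuous.stronglyMeasurable]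

theorem mem_invariantMeasures_of_tendsto_empiricalMeasure [CompactSpace Y] [HasOuterApproxClosed Y]
    [BorelSpace Y] (hf : Continuous f) {ι : Type*} {l : Filter ι} [l.NeBot] {n : ι → ℕ}
    [∀ k, NeZero (n k)] (hn : Tendsto n l atTop) {y : ι → Y} {P : ProbabilityMeasure Y}
    (hP : Tendsto (fun k => empiricalMeasure f (n k) (y k)) l (nhds P)) :
    P ∈ invariantMeasures f := by
  refine ⟨hf.measurable, ?_⟩
  have := Measure.isProbabilityMeasure_map (μ := (P : Measure Y)) hf.measurable.aemeasurable
  refine measure_ext_of_forall_integral_continuousMap_eq fun g => ?_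
  rw [integral_map hf.measurable.aemeasurable g.continuous.aestronglyMeasurable]
  have averages_tendsto (g : C(Y, ℝ)) :
      Tendsto (fun k => birkhoffAverage ℝ f g (n k) (y k)) l
        (nhds (∫ x, g x ∂(P : Measure Y))) := by
    simpa only [Function.comp_def, integral_empiricalMeasure] using
      ((ProbabilityMeasure.continuous_integral_continuousMap g).tendsto P).comp hP
  exact sub_eq_zero.1 <| tendsto_nhds_unique
    ((averages_tendsto (g.comp ⟨f, hf⟩)).sub (averages_tendsto g))
    (tendsto_birkhoffAverage_comp_self_sub g hn y)

theorem exists_invariantMeasure_le_integral_of_frequently [CompactSpace Y] [T2Space Y]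
    [HasOuterApproxClosed Y] [BorelSpace Y] (hf : Continuous f) (ψ : C(Y, ℝ)) {c : ℝ}
    (h : ∃ᶠ m in atTop, ∃ y, c ≤ birkhoffAverage ℝ f ψ m y) :
    ∃ P ∈ invariantMeasures f, c ≤ ∫ x, ψ x ∂(P : Measure Y) := by
  obtain ⟨n, n_mono, hn⟩ := extraction_of_frequently_atTop
    (h.and_eventually (eventually_ne_atTop 0))
  choose y hy using fun k => (hn k).1
  have (k : ℕ) : NeZero (n k) := ⟨(hn k).2⟩
  obtain ⟨P, -, hP⟩ := isCompact_univ.ultrafilter_le_nhds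
    ((hyperfilter ℕ).map fun k => empiricalMeasure f (n k) (y k)) (by simp)
  refine ⟨P, mem_invariantMeasures_of_tendsto_empiricalMeasure hf
    (n_mono.tendsto_atTop.mono_left Nat.hyperfilter_le_atTop) hP, ?_⟩
  refine ge_of_tendsto
    (((ProbabilityMeasure.continuous_integral_continuousMap ψ).tendsto P).comp hP)
    (Eventually.of_forall fun k => ?_)
  simpa only [Function.comp_apply, integral_empiricalMeasure] using hy k

theorem exists_ergodic_le_integral_of_frequently [CompactSpace Y] [T2Space Y]
    [HasOuterApproxClosed Y] [BorelSpace Y] (hf : Continuous f) (ψ : C(Y, ℝ)) {c : ℝ}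
    (h : ∃ᶠ m in atTop, ∃ y, c ≤ birkhoffAverage ℝ f ψ m y) :
    ∃ μ : Measure Y, IsProbabilityMeasure μ ∧ Ergodic f μ ∧ c ≤ ∫ x, ψ x ∂μ := by
  obtain ⟨P, hP, hc⟩ := exists_invariantMeasure_le_integral_of_frequently hf ψ h
  obtain ⟨μ, hμ, hμ_ergodic, hPμ⟩ := exists_ergodic_integral_le_of_mem_invariantMeasures hf ψ hP
  exact ⟨μ, hμ, hμ_ergodic, hc.trans hPμ⟩

theorem eventually_forall_birkhoffAverage_lt [CompactSpace Y] [T2Space Y]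
    [HasOuterApproxClosed Y] [BorelSpace Y] (hf : Continuous f)
    (huniq : ∀ μ ν : Measure Y, IsProbabilityMeasure μ → IsProbabilityMeasure ν →
      Ergodic f μ → Ergodic f ν → μ = ν)
    (ψ : C(Y, ℝ)) {z : Y} {c c' : ℝ} (hz : ∃ᶠ m in atTop, birkhoffAverage ℝ f ψ m z ≤ c)
    (hc : c < c') :
    ∀ᶠ m in atTop, ∀ y, birkhoffAverage ℝ f ψ m y < c' := by
  by_contra h
  simp only [not_eventually, not_forall, not_lt] at h
  obtain ⟨μ, hμ, hμ_ergodic, hμψ⟩ := exists_ergodic_le_integral_of_frequently hf ψ h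
  obtain ⟨ν, hν, hν_ergodic, hνψ⟩ := exists_ergodic_le_integral_of_frequently (c := -c) hf (-ψ) <|
    hz.mono fun m hm => ⟨z, by
      simpa only [ContinuousMap.coe_neg, birkhoffAverage_neg, Pi.neg_apply, neg_le_neg_iff]
        using hm⟩
  obtain rfl := huniq μ ν hμ hν hμ_ergodic hν_ergodic
  simp only [ContinuousMap.neg_apply, integral_neg] at hνψ
  linarith

end ErgodicOptimization

section Counting

open Finset

theorem sum_ite_eq_one_exp_neg_le {A : Type*} [Fintype A] [DecidableEq A] (a₀ : A) (τ : ℝ) :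
    ∑ a, (if a = a₀ then 1 else Real.exp (-τ)) ≤
      Real.exp (Fintype.card A * Real.exp (-τ)) := by
  calc ∑ a, (if a = a₀ then 1 else Real.exp (-τ))
      ≤ ∑ a, ((if a = a₀ then 1 else 0) + Real.exp (-τ)) := by
        gcongr with a
        split_ifs <;> simp [Real.exp_nonneg]
    _ = Fintype.card A * Real.exp (-τ) + 1 := by
        simp [sum_add_distrib, add_comm]
    _ ≤ Real.exp (Fintype.card A * Real.exp (-τ)) := Real.add_one_le_exp _

-- A Chernoff bound: weight each word by `exp (-τ)` to the number of its letters other than `a₀`.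
theorem card_le_exp_of_card_ne_le {ι A : Type*} [Fintype ι] [Fintype A] [DecidableEq A] (a₀ : A)
    {τ K : ℝ} (hτ : 0 ≤ τ) (T : Finset (ι → A))
    (hT : ∀ c ∈ T, (#{p | c p ≠ a₀} : ℝ) ≤ K) :
    (#T : ℝ) ≤ Real.exp (τ * K + Fintype.card ι * (Fintype.card A * Real.exp (-τ))) := by
  classical
  let weight (a : A) : ℝ := if a = a₀ then 1 else Real.exp (-τ)
  have weight_nonneg (a : A) : 0 ≤ weight a := by
    dsimp only [weight]
    split_ifs <;> positivity
  have exp_le_prod_weight : ∀ c ∈ T, Real.exp (-(τ * K)) ≤ ∏ p, weight (c p) := fun c hc => by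
    calc Real.exp (-(τ * K)) ≤ Real.exp (#{p | c p ≠ a₀} * -τ) := by
          gcongr
          nlinarith [hT c hc]
      _ = ∏ p, weight (c p) := by
          simp only [weight, prod_ite, prod_const_one, one_mul, prod_const, Real.exp_nat_mul]
  have card_mul_exp_le :
      #T * Real.exp (-(τ * K)) ≤
        Real.exp (Fintype.card ι * (Fintype.card A * Real.exp (-τ))) := by
    calc #T * Real.exp (-(τ * K)) = ∑ _c ∈ T, Real.exp (-(τ * K)) := by simp
      _ ≤ ∑ c ∈ T, ∏ p, weight (c p) := sum_le_sum exp_le_prod_weight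
      _ ≤ ∑ c : ι → A, ∏ p, weight (c p) :=
          sum_le_univ_sum_of_nonneg fun c => prod_nonneg fun p _ => weight_nonneg _
      _ = (∑ a, weight a) ^ Fintype.card ι := by
          simpa using (Fintype.prod_sum fun (_ : ι) a => weight a).symm
      _ ≤ Real.exp (Fintype.card A * Real.exp (-τ)) ^ Fintype.card ι :=
          pow_le_pow_left₀ (sum_nonneg fun a _ => weight_nonneg a)
            (sum_ite_eq_one_exp_neg_le a₀ τ) _
      _ = Real.exp (Fintype.card ι * (Fintype.card A * Real.exp (-τ))) :=
          (Real.exp_nat_mul _ _).symm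
  calc (#T : ℝ) = Real.exp (τ * K) * (#T * Real.exp (-(τ * K))) := by
        rw [mul_left_comm, ← Real.exp_add, add_neg_cancel, Real.exp_zero, mul_one]
    _ ≤ Real.exp (τ * K) * Real.exp (Fintype.card ι * (Fintype.card A * Real.exp (-τ))) := by
        gcongr
    _ = _ := (Real.exp_add _ _).symm

end Counting

section SeparatedSets

open Finset

variable {f : X → X} {n : ℕ} {ε : ℝ}

/-- `(n, ε)`-separated finite sets: distinct points are more than `ε` apart at some time
before `n`. -/
def DynSeparated (f : X → X) (n : ℕ) (ε : ℝ) (S : Finset X) : Prop :=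
  ∀ y ∈ S, ∀ y' ∈ S, y ≠ y' → ∃ j < n, ε < dist (f^[j] y) (f^[j] y')

-- When the cardinalities are unbounded, `sepNum` takes the junk value `0`, attained by `∅`.
theorem exists_dynSeparated_card_eq_sepNum (f : X → X) (K : Set X) (n : ℕ) (ε : ℝ) :
    ∃ S : Finset X, ↑S ⊆ K ∧ DynSeparated f n ε S ∧ #S = sepNum f K n ε := by
  by_cases hbdd : BddAbove {c : ℕ | ∃ S : Finset X, ↑S ⊆ K ∧ #S = c ∧ DynSeparated f n ε S}
  · obtain ⟨S, hSK, hcard, hS⟩ :=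
      Nat.sSup_mem (by exact ⟨0, ∅, by simp, rfl, by simp [DynSeparated]⟩) hbdd
    exact ⟨S, hSK, hS, hcard⟩
  · exact ⟨∅, by simp, by simp [DynSeparated], (Nat.sSup_of_not_bddAbove hbdd).symm⟩

theorem entScale_le_of_forall_log_card_le {K : Set X} {a b : ℝ}
    (h : ∀ᶠ n : ℕ in atTop, ∀ S : Finset X, ↑S ⊆ K → DynSeparated f n ε S →
      Real.log #S ≤ a * n + b) :
    entScale f K ε ≤ a := by
  have bound_tendsto : Tendsto (fun n : ℕ => ((a + b / n : ℝ) : EReal)) atTop (nhds (a : EReal)) :=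
    EReal.tendsto_coe.2 (by
      simpa using (tendsto_const_div_atTop_nhds_zero_nat b).const_add a)
  refine (limsup_le_limsup ?_).trans bound_tendsto.limsup_eq.le
  filter_upwards [h, eventually_gt_atTop 0] with n hn n_pos
  obtain ⟨S, hSK, hS, hcard⟩ := exists_dynSeparated_card_eq_sepNum f K n ε
  rw [← hcard, EReal.coe_le_coe_iff, div_le_iff₀ (by positivity)]
  calc Real.log #S ≤ a * n + b := hn S hSK hS
    _ = (a + b / n) * n := by field_simp

theorem nonempty_of_topEnt_pos (hpos : 0 < topEnt f) : Nonempty X := by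
  by_contra hX
  rw [not_nonempty_iff] at hX
  refine hpos.not_ge (iSup₂_le fun ε _ => ?_)
  refine entScale_le_of_forall_log_card_le (a := 0) (b := 0)
    (Eventually.of_forall fun n S _ _ => ?_)
  simp [eq_empty_of_isEmpty S]

theorem exists_finite_coloring_dist_le [CompactSpace X] (hε : 0 < ε) :
    ∃ (Q : ℕ) (q : X → Fin Q), ∀ u v, q u = q v → dist u v ≤ ε := by
  obtain ⟨centers, -, centers_finite, cover⟩ :=
    finite_cover_balls_of_compact (isCompact_univ (X := X)) (half_pos hε)
  have exists_center (u : X) : ∃ a : centers, u ∈ Metric.ball (a : X) (ε / 2) := by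
    simpa using cover (mem_univ u)
  choose center mem_ball using exists_center
  have := centers_finite.fintype
  refine ⟨Fintype.card centers, fun u => Fintype.equivFin centers (center u), fun u v huv => ?_⟩
  have center_eq : center u = center v := (Fintype.equivFin centers).injective huv
  have hu := mem_ball u
  rw [center_eq] at hu
  linarith [dist_triangle_right u v (center v), Metric.mem_ball.1 hu,
    Metric.mem_ball.1 (mem_ball v)]

variable {S : Finset X}

theorem DynSeparated.mono {T : Finset X} (hS : DynSeparated f n ε S) (hT : T ⊆ S) :
    DynSeparated f n ε T :=
  fun y hy y' hy' => hS y (hT hy) y' (hT hy')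

variable {α : Type*} {q : X → α} {K τ : ℝ}

open scoped Classical in
/-- The word recording, at the times at which the orbit of `y` is more than `r` away from `w`, the
color of the orbit, and `none` at all other times. -/
noncomputable def deviationCode (f : X → X) (q : X → α) (w : ℕ → X) (r : ℝ) (n : ℕ) (y : X) :
    Fin n → Option α :=
  fun p => if r < dist (f^[p] y) (w p) then some (q (f^[p] y)) else none

theorem card_deviationCode_ne_none_le (f : X → X) (q : X → α) (w : ℕ → X) (r : ℝ) (n : ℕ) (y : X) :
    #{p | deviationCode f q w r n y p ≠ none} ≤ #{p ∈ range n | r < dist (f^[p] y) (w p)} := by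
  refine card_le_card_of_injOn Fin.val (fun p hp => ?_) Fin.val_injective.injOn
  simpa [deviationCode] using hp

theorem DynSeparated.injOn_deviationCode (hS : DynSeparated f n ε S)
    (hq : ∀ u v, q u = q v → dist u v ≤ ε) (w : ℕ → X) :
    Set.InjOn (deviationCode f q w (ε / 2) n) S := by
  intro y hy y' hy' code_eq
  by_contra hne
  obtain ⟨j, hj, hlt⟩ := hS y hy y' hy' hne
  have code_eq_at := congrFun code_eq ⟨j, hj⟩
  unfold deviationCode at code_eq_at
  split_ifs at code_eq_at with hfar hfar' hfar'
  · exact hlt.not_ge (hq _ _ (Option.some_injective _ code_eq_at))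
  · linarith [dist_triangle_right (f^[j] y) (f^[j] y') (w j)]

variable [Fintype α]

theorem DynSeparated.card_le_exp_of_close_to_word (hS : DynSeparated f n ε S)
    (hq : ∀ u v, q u = q v → dist u v ≤ ε) (hτ : 0 ≤ τ) (w : ℕ → X)
    (hw : ∀ y ∈ S, (#{p ∈ range n | ε / 2 < dist (f^[p] y) (w p)} : ℝ) ≤ K) :
    (#S : ℝ) ≤ Real.exp (τ * K + n * ((Fintype.card α + 1) * Real.exp (-τ))) := by
  classical
  have few_letters : ∀ c ∈ S.image (deviationCode f q w (ε / 2) n),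
      (#{p | c p ≠ none} : ℝ) ≤ K := by
    refine forall_mem_image.2 fun y hy => le_trans ?_ (hw y hy)
    exact_mod_cast card_deviationCode_ne_none_le f q w (ε / 2) n y
  simpa [card_image_of_injOn (hS.injOn_deviationCode hq w)] using
    card_le_exp_of_card_ne_le none hτ _ few_letters

theorem DynSeparated.card_le_of_close_to_words {C : Type*} [Fintype C]
    (hS : DynSeparated f n ε S) (hq : ∀ u v, q u = q v → dist u v ≤ ε) (hτ : 0 ≤ τ)
    (w : C → ℕ → X)
    (hw : ∀ y ∈ S, ∃ c, (#{p ∈ range n | ε / 2 < dist (f^[p] y) (w c p)} : ℝ) ≤ K) :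
    (#S : ℝ) ≤
      Fintype.card C * Real.exp (τ * K + n * ((Fintype.card α + 1) * Real.exp (-τ))) := by
  classical
  let fiber (c : C) : Finset X :=
    {y ∈ S | (#{p ∈ range n | ε / 2 < dist (f^[p] y) (w c p)} : ℝ) ≤ K}
  have cover : S ⊆ univ.biUnion fiber := fun y hy => by
    simpa [fiber, hy] using hw y hy
  calc (#S : ℝ) ≤ ∑ c, (#(fiber c) : ℝ) := by
        exact_mod_cast (Finset.card_le_card cover).trans card_biUnion_le
    _ ≤ ∑ _c : C, Real.exp (τ * K + n * ((Fintype.card α + 1) * Real.exp (-τ))) :=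
        sum_le_sum fun c _ => (hS.mono (filter_subset _ S)).card_le_exp_of_close_to_word hq hτ
          (w c) fun y hy => (mem_filter.1 hy).2
    _ = _ := by simp

end SeparatedSets

section Words

open Finset

variable {f : X → X} {w w' : ℕ → X} {n m N : ℕ} {y : X} {ε : ℝ}

/-- The distance of the orbit segment `y, f y, …, f^[n - 1] y` to the first `n` letters of the word
`w`, every letter contributing at most `1`. -/
noncomputable def wordDist (f : X → X) (w : ℕ → X) (n : ℕ) (y : X) : ℝ :=
  ∑ p ∈ range n, min 1 (dist (f^[p] y) (w p))

theorem wordDist_nonneg : 0 ≤ wordDist f w n y :=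
  sum_nonneg fun _ _ => le_min zero_le_one dist_nonneg

theorem wordDist_le_length : wordDist f w n y ≤ n := by
  simpa [wordDist] using sum_le_card_nsmul (range n) _ 1 fun p _ =>
    min_le_left 1 (dist (f^[p] y) (w p))

theorem wordDist_add (f : X → X) (w : ℕ → X) (m n : ℕ) (y : X) :
    wordDist f w (m + n) y =
      wordDist f w m y + wordDist f (fun p => w (m + p)) n (f^[m] y) := by
  simp only [wordDist, sum_range_add, ← Function.iterate_add_apply, add_comm _ m]

theorem wordDist_mono_length (h : m ≤ n) : wordDist f w m y ≤ wordDist f w n y := by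
  obtain ⟨k, rfl⟩ := Nat.exists_eq_add_of_le h
  rw [wordDist_add]
  exact le_add_of_nonneg_right wordDist_nonneg

theorem wordDist_congr (h : ∀ p < n, w p = w' p) : wordDist f w n y = wordDist f w' n y :=
  sum_congr rfl fun p hp => by rw [h p (mem_range.1 hp)]

theorem continuous_wordDist (hf : Continuous f) (w : ℕ → X) (n : ℕ) :
    Continuous (wordDist f w n) :=
  continuous_finsetSum _ fun p _ => continuous_const.min ((hf.iterate p).dist continuous_const)

theorem min_one_mul_card_le_wordDist (f : X → X) (w : ℕ → X) (n : ℕ) (y : X) (ε : ℝ) :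
    min 1 ε * #{p ∈ range n | ε < dist (f^[p] y) (w p)} ≤ wordDist f w n y := by
  calc min 1 ε * #{p ∈ range n | ε < dist (f^[p] y) (w p)}
      = ∑ p ∈ range n with ε < dist (f^[p] y) (w p), min 1 ε := by simp [mul_comm]
    _ ≤ ∑ p ∈ range n with ε < dist (f^[p] y) (w p), min 1 (dist (f^[p] y) (w p)) :=
        sum_le_sum fun p hp => min_le_min_left 1 (mem_filter.1 hp).2.le
    _ ≤ wordDist f w n y :=
        sum_le_sum_of_subset_of_nonneg (filter_subset _ _)
          fun _ _ _ => le_min zero_le_one dist_nonneg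

theorem wordDist_le_mul_add_card (f : X → X) (w : ℕ → X) (n : ℕ) (y : X) (hε : 0 ≤ ε) :
    wordDist f w n y ≤ ε * n + #{p ∈ range n | ε < dist (f^[p] y) (w p)} := by
  calc wordDist f w n y
      ≤ ∑ p ∈ range n, (ε + if ε < dist (f^[p] y) (w p) then 1 else 0) := by
        refine sum_le_sum fun p _ => ?_
        split_ifs with hp
        · linarith [min_le_left 1 (dist (f^[p] y) (w p))]
        · linarith [min_le_right 1 (dist (f^[p] y) (w p))]
    _ = ε * n + #{p ∈ range n | ε < dist (f^[p] y) (w p)} := by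
        simp [sum_add_distrib, mul_comm]

/-- The distance of the orbit segment of length `n` starting at `y` to the closest of the
words in `W`. -/
noncomputable def wordsDist (f : X → X) (W : Finset (ℕ → X)) (hW : W.Nonempty) (n : ℕ)
    (y : X) : ℝ :=
  W.inf' hW fun w => wordDist f w n y

variable {W : Finset (ℕ → X)} {hW : W.Nonempty}

theorem wordsDist_nonneg : 0 ≤ wordsDist f W hW n y :=
  (le_inf'_iff _ _).2 fun _ _ => wordDist_nonneg

theorem continuous_wordsDist (hf : Continuous f) (W : Finset (ℕ → X)) (hW : W.Nonempty) (n : ℕ) :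
    Continuous (wordsDist f W hW n) :=
  Continuous.finset_inf'_apply hW fun w _ => continuous_wordDist hf w n

theorem exists_wordDist_eq_wordsDist (f : X → X) (W : Finset (ℕ → X)) (hW : W.Nonempty) (n : ℕ)
    (y : X) : ∃ w : W, wordDist f w n y = wordsDist f W hW n y := by
  obtain ⟨w, hw, heq⟩ := exists_mem_eq_inf' hW fun w => wordDist f w n y
  exact ⟨⟨w, hw⟩, heq.symm⟩

/-- The word which, from time `s` on, runs through the first `N` letters of `β 0`, then those of
`β 1`, and so on. Before time `s` it is constant, because subtraction is truncated. -/
def concatWord {A : Type*} (s N : ℕ) (β : ℕ → ℕ → A) (p : ℕ) : A :=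
  β ((p - s) / N) ((p - s) % N)

theorem concatWord_apply_block {A : Type*} (s : ℕ) (β : ℕ → ℕ → A) (k : ℕ) {j : ℕ} (hj : j < N) :
    concatWord s N β (s + k * N + j) = β k j := by
  have sub_eq : s + k * N + j - s = j + N * k := by
    rw [add_assoc, Nat.add_sub_cancel_left, add_comm, mul_comm]
  rw [concatWord, sub_eq, Nat.add_mul_div_left _ _ (by omega), Nat.div_eq_of_lt hj, zero_add,
    Nat.add_mul_mod_self_left, Nat.mod_eq_of_lt hj]

theorem wordDist_concatWord_le (f : X → X) (s N : ℕ) (β : ℕ → ℕ → X) (k : ℕ) (y : X) :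
    wordDist f (concatWord s N β) (s + k * N) y ≤
      s + ∑ i ∈ range k, wordDist f (β i) N (f^[s + i * N] y) := by
  induction k with
  | zero => simpa using wordDist_le_length
  | succ k ih =>
    rw [Nat.succ_mul, ← add_assoc, wordDist_add, sum_range_succ,
      wordDist_congr fun p => concatWord_apply_block s β k]
    linarith

theorem sum_range_sum_range_add_mul {R : Type*} [AddCommMonoid R] (g : ℕ → R) (k N : ℕ) :
    ∑ s ∈ range N, ∑ i ∈ range k, g (s + i * N) = ∑ p ∈ range (k * N), g p := by
  rw [sum_comm]
  induction k with
  | zero => simp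
  | succ k ih =>
    rw [sum_range_succ, ih, Nat.succ_mul, sum_range_add]
    simp only [add_comm]

theorem exists_offset_sum_le {g : ℕ → ℝ} (hg : ∀ p, 0 ≤ g p) (hN : 0 < N) (m : ℕ) :
    ∃ s < N, ∑ i ∈ range (m / N), g (s + i * N) ≤ (∑ p ∈ range m, g p) / N := by
  suffices ∃ s ∈ range N, ∑ i ∈ range (m / N), g (s + i * N) ≤ (∑ p ∈ range m, g p) / N by
    simpa only [Finset.mem_range] using this
  refine exists_le_of_sum_le (nonempty_range_iff.2 hN.ne') ?_
  calc ∑ s ∈ range N, ∑ i ∈ range (m / N), g (s + i * N)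
      = ∑ p ∈ range (m / N * N), g p := sum_range_sum_range_add_mul g _ N
    _ ≤ ∑ p ∈ range m, g p :=
        sum_le_sum_of_subset_of_nonneg (range_subset_range.2 (Nat.div_mul_le_self m N))
          fun p _ _ => hg p
    _ = ∑ _s ∈ range N, (∑ p ∈ range m, g p) / N := by
        rw [sum_const, card_range, nsmul_eq_mul, mul_div_cancel₀ _ (by positivity)]

theorem exists_wordDist_concatWord_le (hN : 0 < N) (m : ℕ) (y : X) :
    ∃ (s : Fin N) (β : Fin (m / N + 1) → W),
      wordDist f (concatWord s N fun i => β (Fin.ofNat _ i)) m y ≤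
        2 * N + birkhoffSum f (wordsDist f W hW N) m y / N := by
  obtain ⟨s, hs, hsum⟩ := exists_offset_sum_le
    (g := fun p => wordsDist f W hW N (f^[p] y)) (fun _ => wordsDist_nonneg) hN m
  choose closest hclosest using exists_wordDist_eq_wordsDist f W hW N
  let β (i : Fin (m / N + 1)) : W := closest (f^[s + i * N] y)
  refine ⟨⟨s, hs⟩, β, ?_⟩
  have m_le : m ≤ s + m / N * N + N := by
    have := Nat.lt_div_mul_add hN (a := m)
    omega
  have s_le : (s : ℝ) ≤ N := by exact_mod_cast hs.le
  have blocks_eq : ∑ i ∈ range (m / N), wordDist f (β (Fin.ofNat _ i)) N (f^[s + i * N] y) =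
      ∑ i ∈ range (m / N), wordsDist f W hW N (f^[s + i * N] y) := by
    refine sum_congr rfl fun i hi => ?_
    have : i % (m / N + 1) = i := Nat.mod_eq_of_lt (by have := mem_range.1 hi; omega)
    simp only [β, Fin.ofNat, this, hclosest]
  calc wordDist f (concatWord s N fun i => β (Fin.ofNat _ i)) m y
      ≤ wordDist f (concatWord s N fun i => β (Fin.ofNat _ i)) (s + m / N * N + N) y :=
        wordDist_mono_length m_le
    _ ≤ s + ∑ i ∈ range (m / N), wordDist f (β (Fin.ofNat _ i)) N (f^[s + i * N] y) + N := by
        rw [wordDist_add]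
        exact add_le_add (wordDist_concatWord_le ..) wordDist_le_length
    _ ≤ 2 * N + birkhoffSum f (wordsDist f W hW N) m y / N := by
        rw [blocks_eq, birkhoffSum]
        linarith

variable {α : Type*} [Fintype α] {q : X → α} {S : Finset X} {τ c : ℝ}

theorem DynSeparated.card_le_of_birkhoffAverage_wordsDist_le (hS : DynSeparated f m ε S)
    (hq : ∀ u v, q u = q v → dist u v ≤ ε) (hε : 0 < ε) (hτ : 0 ≤ τ) (hN : 0 < N) (hm : 0 < m)
    (hc : ∀ y, birkhoffAverage ℝ f (wordsDist f W hW N) m y ≤ c * N) :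
    (#S : ℝ) ≤ N * (#W : ℝ) ^ (m / N + 1) *
      Real.exp (τ * ((2 * N + c * m) / min 1 (ε / 2)) +
        m * ((Fintype.card α + 1) * Real.exp (-τ))) := by
  have sum_le (y : X) : birkhoffSum f (wordsDist f W hW N) m y / N ≤ c * m := by
    have := hc y
    rw [birkhoffAverage, smul_eq_mul, inv_mul_le_iff₀ (by positivity)] at this
    rw [div_le_iff₀ (by positivity)]
    linarith
  have few_deviations (y : X) : ∃ code : Fin N × (Fin (m / N + 1) → W),
      (#{p ∈ range m | ε / 2 < dist (f^[p] y)
        (concatWord code.1 N (fun i => code.2 (Fin.ofNat _ i)) p)} : ℝ) ≤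
      (2 * N + c * m) / min 1 (ε / 2) := by
    obtain ⟨s, β, hβ⟩ := exists_wordDist_concatWord_le (f := f) (hW := hW) hN m y
    refine ⟨(s, β), (le_div_iff₀' (by positivity)).2 ?_⟩
    linarith [sum_le y, min_one_mul_card_le_wordDist f
      (concatWord s N fun i => β (Fin.ofNat _ i)) m y (ε / 2)]
  simpa using hS.card_le_of_close_to_words hq hτ
    (fun code : Fin N × (Fin (m / N + 1) → W) =>
      concatWord code.1 N fun i => code.2 (Fin.ofNat _ i)) fun y _ => few_deviations y

theorem DynSeparated.log_card_le_of_birkhoffAverage_wordsDist_le (hS : DynSeparated f m ε S)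
    (hq : ∀ u v, q u = q v → dist u v ≤ ε) (hε : 0 < ε) (hτ : 0 ≤ τ) (hN : 0 < N) (hm : 0 < m)
    (hc₀ : 0 ≤ c) (hc : ∀ y, birkhoffAverage ℝ f (wordsDist f W hW N) m y ≤ c * N) :
    Real.log #S ≤
      (Real.log #W / N + τ * c / min 1 (ε / 2) + (Fintype.card α + 1) * Real.exp (-τ)) * m +
        (Real.log N + Real.log #W + 2 * τ * N / min 1 (ε / 2)) := by
  obtain rfl | hS_nonempty := S.eq_empty_or_nonempty
  · simp only [Finset.card_empty, Nat.cast_zero, Real.log_zero]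
    positivity
  have : (0 : ℝ) < #W := by exact_mod_cast hW.card_pos
  have div_le : ((m / N : ℕ) : ℝ) ≤ m / N := Nat.cast_div_le
  calc Real.log #S
      ≤ Real.log (N * (#W : ℝ) ^ (m / N + 1) *
          Real.exp (τ * ((2 * N + c * m) / min 1 (ε / 2)) +
            m * ((Fintype.card α + 1) * Real.exp (-τ)))) :=
        Real.log_le_log (by exact_mod_cast hS_nonempty.card_pos)
          (hS.card_le_of_birkhoffAverage_wordsDist_le hq hε hτ hN hm hc)
    _ = Real.log N + ((m / N : ℕ) + 1) * Real.log #W +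
          (τ * ((2 * N + c * m) / min 1 (ε / 2)) +
            m * ((Fintype.card α + 1) * Real.exp (-τ))) := by
        rw [Real.log_mul (by positivity) (by positivity), Real.log_exp,
          Real.log_mul (by positivity) (by positivity), Real.log_pow, Nat.cast_add_one]
    _ ≤ Real.log N + (m / N + 1) * Real.log #W +
          (τ * ((2 * N + c * m) / min 1 (ε / 2)) +
            m * ((Fintype.card α + 1) * Real.exp (-τ))) := by
        gcongr
    _ = _ := by ring

/-- For every `η > 0` there are at most `exp (η N)` words of some length `N` such that a typical
orbit segment of length `N`, on any sufficiently long orbit, is `η N`-close to one of them. -/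
def CodableByFewWords (f : X → X) : Prop :=
  ∀ η : ℝ, 0 < η → ∃ N : ℕ, 0 < N ∧ ∃ (W : Finset (ℕ → X)) (hW : W.Nonempty),
    Real.log #W ≤ η * N ∧
      ∀ᶠ m in atTop, ∀ y, birkhoffAverage ℝ f (wordsDist f W hW N) m y ≤ η * N

theorem exists_nonneg_mul_exp_neg_le (A : ℝ) {a : ℝ} (ha : 0 < a) :
    ∃ τ : ℝ, 0 ≤ τ ∧ A * Real.exp (-τ) ≤ a := by
  have h := Real.tendsto_exp_neg_atTop_nhds_zero.const_mul A
  rw [mul_zero] at h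
  exact ((eventually_ge_atTop 0).and (h.eventually_le_const ha)).exists

theorem CodableByFewWords.entScale_le [CompactSpace X] (h : CodableByFewWords f) (hε : 0 < ε)
    {a : ℝ} (ha : 0 < a) : entScale f Set.univ ε ≤ a := by
  obtain ⟨Q, q, hq⟩ := exists_finite_coloring_dist_le (X := X) hε
  obtain ⟨τ, hτ, hτ_small⟩ := exists_nonneg_mul_exp_neg_le (Q + 1) (by positivity : 0 < a / 3)
  let κ : ℝ := min 1 (ε / 2)
  have κ_pos : 0 < κ := by positivity
  let η : ℝ := min (a / 3) (a / 3 * κ / (τ + 1))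
  have η_pos : 0 < η := by positivity
  have τη_le : τ * η / κ ≤ a / 3 := by
    calc τ * η / κ ≤ (τ + 1) * (a / 3 * κ / (τ + 1)) / κ := by
          gcongr
          · linarith
          · exact min_le_right _ _
      _ = a / 3 := by field_simp
  obtain ⟨N, hN, W, hW, hW_card, hclose⟩ := h η η_pos
  have log_div_le : Real.log #W / N ≤ a / 3 :=
    ((div_le_iff₀ (by positivity)).2 hW_card).trans (min_le_left _ _)
  refine entScale_le_of_forall_log_card_le
    (b := Real.log N + Real.log #W + 2 * τ * N / κ) ?_
  filter_upwards [hclose, eventually_gt_atTop 0] with m hclose_m hm S _ hS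
  refine (hS.log_card_le_of_birkhoffAverage_wordsDist_le hq hε hτ hN hm η_pos.le hclose_m).trans ?_
  gcongr
  rw [Fintype.card_fin]
  linarith

theorem CodableByFewWords.topEnt_nonpos [CompactSpace X] (h : CodableByFewWords f) :
    topEnt f ≤ 0 :=
  iSup₂_le fun _ hε => EReal.le_of_forall_lt_iff_le.1 fun _ ha =>
    h.entScale_le hε (EReal.coe_pos.1 ha)

end Words

section Tracing

open Finset

variable {f : X → X} {x y z : X} {u : ℕ → ℕ} {n M : ℕ} {δ₁ δ₂ ε η : ℝ}

/-- The word following the orbit of `x` and starting it afresh at every time in `B`. At times before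
the first element of `B` it is `f^[p] x`, because `Nat.findGreatest` returns `0` when there is
no witness. -/
def restartWord {A : Type*} (f : A → A) (x : A) (B : Finset ℕ) (p : ℕ) : A :=
  f^[p - Nat.findGreatest (· ∈ B) p] x

theorem restartWord_image_apply {A : Type*} (f : A → A) (x : A) (hu : ∀ l, u l + n ≤ u (l + 1))
    {l j : ℕ} (hl : l < M) (hj : j < n) :
    restartWord f x ((range M).image u) (u l + j) = f^[j] x := by
  have u_mono : Monotone u := monotone_nat_of_le_succ fun l => (Nat.le_add_right _ _).trans (hu l)
  have last_restart : Nat.findGreatest (· ∈ (range M).image u) (u l + j) = u l := by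
    refine Nat.findGreatest_eq_iff.2 ⟨Nat.le_add_right _ _,
      fun _ => mem_image_of_mem u (Finset.mem_range.2 hl), fun p hlt hle hp => ?_⟩
    obtain ⟨l', -, rfl⟩ := Finset.mem_image.1 hp
    have := hu l
    have : u (l + 1) ≤ u l' := u_mono (u_mono.reflect_lt hlt)
    omega
  rw [restartWord, last_restart, Nat.add_sub_cancel_left]

open scoped Classical in
/-- The words restarting the orbit of `x` exactly `M` times before time `R`. -/
noncomputable def restartWords {A : Type*} (f : A → A) (x : A) (M R : ℕ) :
    Finset (ℕ → A) :=
  (powersetCard M (range R)).image (restartWord f x)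

theorem restartWords_nonempty {A : Type*} (f : A → A) (x : A) {R : ℕ} (h : M ≤ R) :
    (restartWords f x M R).Nonempty := by
  classical
  exact (powersetCard_nonempty.2 (by simpa using h)).image _

theorem card_restartWords_le {A : Type*} (f : A → A) (x : A) (M R : ℕ) :
    #(restartWords f x M R) ≤ R ^ M := by
  classical
  exact card_image_le.trans (by simpa using Nat.choose_le_pow R M)

theorem wordDist_le_of_forall_block {w : ℕ → X} (hu : ∀ l, u l + n ≤ u (l + 1))
    (hgap : ∀ l, (u (l + 1) : ℝ) ≤ u l + n + δ₁ * n) (hε : 0 ≤ ε)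
    (hw : ∀ l < M, ∀ j < n, w (u l + j) = f^[j] x)
    (hdev : ∀ l < M, (#{j ∈ range n | ε < dist (f^[u l + j] y) (f^[j] x)} : ℝ) ≤ δ₂ * n) :
    wordDist f w (u M) y ≤ u 0 + M * ((δ₁ + δ₂ + ε) * n) := by
  induction M with
  | zero => simpa using wordDist_le_length
  | succ M ih =>
    have ih := ih (fun l hl => hw l (hl.trans M.lt_succ_self))
      fun l hl => hdev l (hl.trans M.lt_succ_self)
    obtain ⟨gap, hgap_eq⟩ := Nat.exists_eq_add_of_le (hu M)
    have gap_le : (gap : ℝ) ≤ δ₁ * n := by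
      have := hgap M
      rw [hgap_eq] at this
      push_cast at this
      linarith
    have block_le : wordDist f (fun j => w (u M + j)) n (f^[u M] y) ≤ ε * n + δ₂ * n := by
      rw [wordDist_congr (hw M M.lt_succ_self)]
      refine (wordDist_le_mul_add_card f _ n _ hε).trans ?_
      have := hdev M M.lt_succ_self
      simp only [← Function.iterate_add_apply, add_comm _ (u M)]
      linarith
    rw [hgap_eq, wordDist_add, wordDist_add, Nat.cast_add_one]
    have gap_dist_le := wordDist_le_length (f := f) (w := fun p => w (u M + n + p)) (n := gap)
      (y := f^[u M + n] y)
    linarith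

theorem exists_mem_Icc_of_bounded_gaps {s : ℕ → ℕ} {g : ℕ} (hs₀ : s 0 = 0)
    (hs : ∀ k, s k < s (k + 1)) (hg : ∀ k, s (k + 1) ≤ s k + g) (i : ℕ) :
    ∃ k, s k ∈ Set.Icc i (i + g) := by
  induction i with
  | zero => exact ⟨0, by simp [hs₀]⟩
  | succ i ih =>
    obtain ⟨k, hik, hki⟩ := ih
    obtain h | h := hik.lt_or_eq
    · exact ⟨k, h, by omega⟩
    · have := hs k
      have := hg k
      exact ⟨k + 1, by omega, by omega⟩

theorem exists_mem_restartWords_wordDist_le_of_blocks (hn : 0 < n) (hu₀ : u 0 ≤ 2 * n)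
    (hu : ∀ l, u l + n ≤ u (l + 1)) (hgap : ∀ l, (u (l + 1) : ℝ) ≤ u l + n + δ₁ * n)
    (hδ₁ : δ₁ ≤ 1) (hε : 0 ≤ ε)
    (hdev : ∀ l, (#{j ∈ range n | ε < dist (f^[u l + j] y) (f^[j] x)} : ℝ) ≤ δ₂ * n) (M : ℕ) :
    ∃ w ∈ restartWords f x M (2 * n * (M + 1)),
      wordDist f w (n * M) y ≤ 2 * n + M * ((δ₁ + δ₂ + ε) * n) := by
  classical
  have u_strictMono : StrictMono u := strictMono_nat_of_lt_succ fun l => by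
    have := hu l
    omega
  have u_ge (l : ℕ) : n * l ≤ u l := by
    induction l with
    | zero => simp
    | succ l ih => exact (Nat.mul_succ n l).trans_le ((Nat.add_le_add_right ih n).trans (hu l))
  have u_le (l : ℕ) : u l ≤ 2 * n * (l + 1) := by
    induction l with
    | zero => simpa using hu₀
    | succ l ih =>
      have : δ₁ * n ≤ n := mul_le_of_le_one_left (by positivity) hδ₁
      have : u (l + 1) ≤ u l + 2 * n := by
        exact_mod_cast (by linarith [hgap l] : (u (l + 1) : ℝ) ≤ u l + 2 * n)
      linarith
  have restarts_mem : (range M).image u ∈ powersetCard M (range (2 * n * (M + 1))) := by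
    refine mem_powersetCard.2 ⟨fun p hp => ?_, ?_⟩
    · obtain ⟨l, hl, rfl⟩ := Finset.mem_image.1 hp
      have : u l < u M := u_strictMono (Finset.mem_range.1 hl)
      exact Finset.mem_range.2 (this.trans_le (u_le M))
    · rw [card_image_of_injective _ u_strictMono.injective, card_range]
  refine ⟨_, mem_image_of_mem _ restarts_mem, (wordDist_mono_length (u_ge M)).trans ?_⟩
  have hu₀' : (u 0 : ℝ) ≤ 2 * n := by exact_mod_cast hu₀
  linarith [wordDist_le_of_forall_block (M := M) hu hgap hε
    (fun l hl j hj => restartWord_image_apply f x hu hl hj) fun l _ => hdev l]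

theorem segStart_succ_add_one {m t : ℕ → ℕ} {k : ℕ} (ht : 0 < t k) :
    segStart m t (k + 1) + 1 = segStart m t k + m k + t k := by
  rw [segStart, sum_range_succ, ← segStart]
  omega

theorem Traced.exists_mem_restartWords_wordDist_le {t : ℕ → ℕ}
    (hz : Traced f (fun _ => x) (fun _ => n) t δ₂ ε z) (hn : 0 < n) (ht_pos : ∀ k, 0 < t k)
    (ht : ∀ k, (t k : ℝ) ≤ 1 + δ₁ * n) (hδ₁ : δ₁ ≤ 1) (hε : 0 ≤ ε) (M i : ℕ) :
    ∃ w ∈ restartWords f x M (2 * n * (M + 1)),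
      wordDist f w (n * M) (f^[i] z) ≤ 2 * n + M * ((δ₁ + δ₂ + ε) * n) := by
  have start_succ (k : ℕ) : segStart (fun _ => n) t (k + 1) + 1 =
      segStart (fun _ => n) t k + n + t k := segStart_succ_add_one (ht_pos k)
  have t_le (k : ℕ) : t k ≤ n + 1 := by
    have : δ₁ * n ≤ n := mul_le_of_le_one_left (by positivity) hδ₁
    exact_mod_cast (by linarith [ht k] : (t k : ℝ) ≤ n + 1)
  obtain ⟨k₀, hk₀, hk₀'⟩ := exists_mem_Icc_of_bounded_gaps (s := segStart (fun _ => n) t)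
    (g := 2 * n) rfl (fun k => by grind) (fun k => by grind) i
  have start_mono : Monotone (segStart (fun _ => n) t) :=
    monotone_nat_of_le_succ fun k => by grind
  obtain ⟨u, hu⟩ : ∃ u : ℕ → ℕ, ∀ l, segStart (fun _ => n) t (k₀ + l) = u l + i :=
    ⟨fun l => segStart (fun _ => n) t (k₀ + l) - i, fun l =>
      (Nat.sub_add_cancel (hk₀.trans (start_mono (Nat.le_add_right _ _)))).symm⟩
  have u_succ (l : ℕ) : u (l + 1) + 1 = u l + n + t (k₀ + l) := by
    have := start_succ (k₀ + l)
    rw [add_assoc, hu, hu] at this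
    omega
  have u_zero : u 0 ≤ 2 * n := by
    have := hu 0
    rw [add_zero] at this
    omega
  refine exists_mem_restartWords_wordDist_le_of_blocks hn u_zero (fun l => by grind)
    (fun l => ?_) hδ₁ hε (fun l => ?_) M
  · have : (u (l + 1) : ℝ) + 1 = u l + n + t (k₀ + l) := by exact_mod_cast u_succ l
    linarith [ht (k₀ + l)]
  · simpa only [← Function.iterate_add_apply, hu, add_right_comm] using hz (k₀ + l)

theorem eventually_log_mul_le (hη : 0 < η) {A : ℝ} (hA : 0 < A) :
    ∀ᶠ n : ℕ in atTop, Real.log (A * n) ≤ η * n := by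
  have hlim : Tendsto (fun n : ℕ => A * (n : ℝ)) atTop atTop :=
    tendsto_natCast_atTop_atTop.const_mul_atTop hA
  filter_upwards [hlim.eventually (Real.isLittleO_log_id_atTop.bound (div_pos hη hA))] with n hn
  calc Real.log (A * n) ≤ ‖Real.log (A * n)‖ := Real.le_norm_self _
    _ ≤ η / A * ‖A * n‖ := hn
    _ = η * n := by
      rw [Real.norm_of_nonneg (by positivity)]
      field_simp

theorem log_card_restartWords_le {A : Type*} (f : A → A) (x : A) (M : ℕ) (hn : 0 < n)
    (hlog : Real.log (2 * (M + 1) * n) ≤ η * n) :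
    Real.log #(restartWords f x M (2 * n * (M + 1))) ≤ η * (n * M : ℕ) := by
  calc Real.log #(restartWords f x M (2 * n * (M + 1)))
      ≤ Real.log (((2 * n * (M + 1) : ℕ) : ℝ) ^ M) := by
        refine Real.log_le_log ?_ (by exact_mod_cast card_restartWords_le f x M _)
        exact_mod_cast (restartWords_nonempty f x (by nlinarith)).card_pos
    _ = M * Real.log (2 * (M + 1) * n) := by
        rw [Real.log_pow]
        push_cast
        ring_nf
    _ ≤ M * (η * n) := by gcongr
    _ = η * (n * M : ℕ) := by
        push_cast
        ring

theorem ApproxProduct.exists_words_wordsDist_orbit_le [Nonempty X] (h : ApproxProduct f)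
    (hη : 0 < η) :
    ∃ N : ℕ, 0 < N ∧ ∃ (W : Finset (ℕ → X)) (hW : W.Nonempty),
      Real.log #W ≤ η * N ∧ ∃ z, ∀ i, wordsDist f W hW N (f^[i] z) ≤ η * N := by
  obtain ⟨x⟩ := ‹Nonempty X›
  let δ : ℝ := min 1 (η / 6)
  have hδ : 0 < δ := by positivity
  obtain ⟨M, hM⟩ := exists_nat_ge (4 / η)
  have M_pos : (0 : ℝ) < M := (by positivity : 0 < 4 / η).trans_le hM
  obtain ⟨n₀, hn₀⟩ := h δ δ δ hδ hδ hδ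
  obtain ⟨n, hn_log, hn⟩ := ((eventually_log_mul_le hη (by positivity : 0 < 2 * ((M : ℝ) + 1))).and
    (eventually_gt_atTop n₀)).exists
  have n_pos : 0 < n := Nat.zero_lt_of_lt hn
  obtain ⟨t, ht_pos, ht, z, hz⟩ := hn₀ n hn fun _ => x
  have hW : (restartWords f x M (2 * n * (M + 1))).Nonempty :=
    restartWords_nonempty f x (by nlinarith)
  refine ⟨n * M, Nat.mul_pos n_pos (by exact_mod_cast M_pos), _, hW,
    log_card_restartWords_le f x M n_pos hn_log, z, fun i => ?_⟩
  obtain ⟨w, hw, hwz⟩ := hz.exists_mem_restartWords_wordDist_le n_pos ht_pos ht (min_le_left _ _)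
    hδ.le M i
  have four_le : 4 ≤ M * η := (div_le_iff₀ hη).1 hM
  have δ_le : δ + δ + δ ≤ η / 2 := by linarith [min_le_right 1 (η / 6)]
  calc wordsDist f _ hW (n * M) (f^[i] z) ≤ wordDist f w (n * M) (f^[i] z) := inf'_le _ hw
    _ ≤ 2 * n + M * ((δ + δ + δ) * n) := hwz
    _ ≤ M * η / 2 * n + M * (η / 2 * n) := by
        gcongr
        linarith
    _ = η * (n * M : ℕ) := by
        push_cast
        ring

theorem ApproxProduct.codableByFewWords [CompactSpace X] [Nonempty X] [MeasurableSpace X]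
    [BorelSpace X] (h : ApproxProduct f) (hf : Continuous f)
    (huniq : ∀ μ ν : Measure X, IsProbabilityMeasure μ → IsProbabilityMeasure ν →
      Ergodic f μ → Ergodic f ν → μ = ν) :
    CodableByFewWords f := by
  intro η hη
  obtain ⟨N, hN, W, hW, hW_card, z, hz⟩ := h.exists_words_wordsDist_orbit_le (half_pos hη)
  have average_le : ∀ m, 0 < m → birkhoffAverage ℝ f (wordsDist f W hW N) m z ≤ η / 2 * N := by
    intro m hm
    rw [birkhoffAverage, smul_eq_mul, inv_mul_le_iff₀ (by positivity), birkhoffSum]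
    simpa using sum_le_card_nsmul (range m) _ _ fun i _ => hz i
  have half_lt : η / 2 * N < η * N := by
    gcongr
    linarith
  refine ⟨N, hN, W, hW, hW_card.trans half_lt.le, ?_⟩
  exact (eventually_forall_birkhoffAverage_lt hf huniq
    ⟨wordsDist f W hW N, continuous_wordsDist hf W hW N⟩
    ((eventually_gt_atTop 0).mono average_le).frequently half_lt).mono
    fun m hm y => (hm y).le

end Tracing

/-- If a compact system with the approximate product property has strictly positive
topological entropy, then it admits at least two distinct ergodic invariant Borel
probability measures. -/
theorem app_topEnt_pos_two_ergodic_measures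
    {X : Type*} [MetricSpace X] [CompactSpace X] [MeasurableSpace X] [BorelSpace X]
    (f : X → X) (hf : Continuous f) (happ : ApproxProduct f)
    (hpos : 0 < topEnt f) :
    ∃ μ ν : Measure X, IsProbabilityMeasure μ ∧ IsProbabilityMeasure ν ∧
      Ergodic f μ ∧ Ergodic f ν ∧ μ ≠ ν := by
  by_contra! h
  have := nonempty_of_topEnt_pos hpos
  exact hpos.not_ge (happ.codableByFewWords hf h).topEnt_nonpos

end Defs
end
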